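/- arXiv:math/0412551 — 2 statements merged into one kernel-verified Lean document; each statement's English description precedes it below -/
import Mathlib

section
/- Kreps–Yan theorem for L^∞ with the norm topology: Let C ⊆ L^∞(Ω, F, P) be a norm-closed convex cone satisfying C ∩ L^∞_+ = {0} and -L^∞_+ ⊆ C. Then there exists a continuous linear functional μ on L^∞ that is strictly positive (⟨x, μ⟩ > 0 for all x ∈ L^∞_+ \ {0}) and satisfies ⟨x, μ⟩ ≤ 0 for all x ∈ C. -/
open MeasureTheory

namespace KrepsYan

variable {E : Type*} [NormedAddCommGroup E] [NormedSpace ℝ E] [Lattice E] [IsOrderedAddMonoid E]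
  [PosSMulMono ℝ E]

/-- null elements of a functional in the order interval `[0,e]` -/
def Nul (e : E) (μ : E →L[ℝ] ℝ) : Set E := {x | 0 ≤ x ∧ x ≤ e ∧ μ x = 0}

lemma convex_nul (e : E) (μ : E →L[ℝ] ℝ) : Convex ℝ (Nul e μ) := by
  rintro x ⟨hx, hxe, hx0⟩ y ⟨hy, hye, hy0⟩ a b ha hb hab
  refine ⟨add_nonneg (smul_nonneg ha hx) (smul_nonneg hb hy), ?_, by simp [hx0, hy0]⟩
  calc a • x + b • y ≤ a • e + b • e :=
        add_le_add (smul_le_smul_of_nonneg_left hxe ha) (smul_le_smul_of_nonneg_left hye hb)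
    _ = e := by rw [← add_smul, hab, one_smul]

lemma separate {C X : Set E} (hconv : Convex ℝ C)
    (hcone : ∀ (c : ℝ), 0 ≤ c → ∀ x ∈ C, c • x ∈ C) (h0 : (0 : E) ∈ C)
    (hX : Convex ℝ X) {δ : ℝ} (hδ : 0 < δ) (hd : ∀ x ∈ X, ∀ c ∈ C, δ ≤ ‖x - c‖) :
    ∃ ν : E →L[ℝ] ℝ, (∀ x ∈ C, ν x ≤ 0) ∧ ∀ x ∈ X, 0 < ν x := by
  have hdisj : Disjoint (Metric.thickening δ X) C := by
    rw [Set.disjoint_left]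
    intro y hy hyC
    obtain ⟨x, hx, hxy⟩ := Metric.mem_thickening_iff.1 hy
    have := hd x hx y hyC
    rw [dist_comm, dist_eq_norm] at hxy
    linarith
  obtain ⟨f, u, hf, hu⟩ := geometric_hahn_banach_open (hX.thickening δ)
    Metric.isOpen_thickening hconv hdisj
  have hu0 : u ≤ 0 := by simpa using hu 0 h0
  refine ⟨-f, fun x hx => ?_, fun x hx => ?_⟩
  · by_contra hcon
    simp only [ContinuousLinearMap.neg_apply, not_le] at hcon
    have hfx : f x < 0 := by linarith
    have := hu _ (hcone ((u - 1) / f x) (div_nonneg_of_nonpos (by linarith) hfx.le) x hx)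
    rw [map_smul, smul_eq_mul, div_mul_cancel₀ _ hfx.ne] at this
    linarith
  · have := hf x (Metric.self_subset_thickening hδ X hx)
    simp only [ContinuousLinearMap.neg_apply]
    linarith

lemma countable_sum {C : Set E} (f : ℕ → E →L[ℝ] ℝ)
    (hC : ∀ n, ∀ x ∈ C, f n x ≤ 0) (hneg : ∀ x : E, 0 ≤ x → -x ∈ C) :
    ∃ μ : E →L[ℝ] ℝ, (∀ x ∈ C, μ x ≤ 0) ∧ ∀ x, 0 ≤ x → μ x = 0 → ∀ n, f n x = 0 := by
  let w : ℕ → ℝ := fun n => (1 / 2) ^ n / (1 + ‖f n‖)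
  have hw : ∀ n, 0 < w n := fun n => by positivity
  have hs : Summable (fun n => w n • f n) := by
    refine Summable.of_norm_bounded (g := fun n => (1 / 2 : ℝ) ^ n) summable_geometric_two ?_
    intro n
    rw [norm_smul, Real.norm_of_nonneg (hw n).le]
    have : 0 < 1 + ‖f n‖ := by positivity
    simp only [w]
    rw [div_mul_eq_mul_div, div_le_iff₀ this]
    gcongr
    linarith
  have hsx : ∀ x, HasSum (fun n => w n * f n x) ((∑' n, w n • f n) x) := fun x => by
    simpa using hs.hasSum.mapL (ContinuousLinearMap.apply ℝ ℝ x)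
  refine ⟨∑' n, w n • f n, fun x hx => ?_, fun x hx h0 n => ?_⟩
  · exact (hsx x).nonpos fun n => mul_nonpos_of_nonneg_of_nonpos (hw n).le (hC n x hx)
  · have hnn : ∀ n, 0 ≤ f n x := fun n => by
      have := hC n _ (hneg x hx)
      rw [map_neg] at this
      linarith
    have h := hsx x
    rw [h0, hasSum_zero_iff_of_nonneg (fun n => mul_nonneg (hw n).le (hnn n))] at h
    have := congrFun h n
    simpa [(hw n).ne'] using this

theorem main (I : E →ₗ[ℝ] ℝ) (e : E) (he : 0 ≤ e) (hImono : ∀ x, 0 ≤ x → 0 ≤ I x)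
    (hIpos : ∀ x, 0 ≤ x → x ≠ 0 → 0 < I x)
    (hunit : ∀ x : E, 0 ≤ x → ∃ c : ℝ, 0 < c ∧ c • x ≤ e)
    (hinf : ∀ (y : ℕ → E) (c : ℝ), Antitone y → (∀ n, 0 ≤ y n) → (∀ n, c ≤ I (y n)) →
      ∃ z, 0 ≤ z ∧ (∀ n, z ≤ y n) ∧ c ≤ I z)
    (C : Set E) (hclosed : IsClosed C) (hconv : Convex ℝ C)
    (hcone : ∀ (c : ℝ), 0 ≤ c → ∀ x ∈ C, c • x ∈ C)
    (hC_pos : ∀ x ∈ C, 0 ≤ x → x = 0)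
    (hneg : ∀ x : E, 0 ≤ x → -x ∈ C) :
    ∃ μ : E →L[ℝ] ℝ, (∀ x : E, 0 ≤ x → x ≠ 0 → 0 < μ x) ∧ (∀ x ∈ C, μ x ≤ 0) := by
  have h0C : (0 : E) ∈ C := by simpa using hneg 0 le_rfl
  have hadd : ∀ x ∈ C, ∀ y ∈ C, x + y ∈ C := fun x hx y hy => by
    have := hcone 2 (by norm_num) _ (hconv hx hy (a := 1/2) (b := 1/2)
      (by norm_num) (by norm_num) (by norm_num))
    rw [smul_add, smul_smul, smul_smul] at this
    norm_num at this
    exact this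
  have hIle : ∀ x y, x ≤ y → I x ≤ I y := fun x y h => by
    have := hImono (y - x) (sub_nonneg.2 h)
    rw [map_sub] at this
    linarith
  let K : Set (E →L[ℝ] ℝ) := {μ | ∀ x ∈ C, μ x ≤ 0}
  have hKnn : ∀ μ ∈ K, ∀ x, 0 ≤ x → 0 ≤ μ x := fun μ hμ x hx => by
    have := hμ _ (hneg x hx)
    rw [map_neg] at this
    linarith
  let s : (E →L[ℝ] ℝ) → ℝ := fun μ => sSup (I '' Nul e μ)
  have hne : ∀ μ, (I '' Nul e μ).Nonempty := fun μ => ⟨I 0, 0, ⟨le_rfl, he, by simp⟩, rfl⟩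
  have hbdd : ∀ μ, BddAbove (I '' Nul e μ) := fun μ => ⟨I e, by
    rintro _ ⟨x, hx, rfl⟩; exact hIle _ _ hx.2.1⟩
  have hle : ∀ μ, ∀ x ∈ Nul e μ, I x ≤ s μ := fun μ x hx => le_csSup (hbdd μ) ⟨x, hx, rfl⟩
  have hs0 : ∀ μ, 0 ≤ s μ := fun μ => by
    simpa using hle μ 0 ⟨le_rfl, he, by simp⟩
  -- minimiser
  have hmin : ∃ μ ∈ K, ∀ ν ∈ K, s μ ≤ s ν := by
    have hKne : (s '' K).Nonempty := ⟨s 0, 0, fun x _ => by simp, rfl⟩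
    have hKb : BddBelow (s '' K) := ⟨0, by rintro _ ⟨μ, _, rfl⟩; exact hs0 μ⟩
    obtain ⟨u, -, hu, hus⟩ := exists_seq_tendsto_sInf hKne hKb
    choose f hfK hfu using hus
    obtain ⟨μ, hμ, hμn⟩ := countable_sum f hfK hneg
    refine ⟨μ, hμ, fun ν hν => ?_⟩
    have h1 : ∀ n, s μ ≤ u n := fun n => by
      rw [← hfu n]
      refine csSup_le_csSup (hbdd _) (hne _) (Set.image_mono ?_)
      rintro x ⟨hx, hxe, hx0⟩
      exact ⟨hx, hxe, hμn x hx hx0 n⟩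
    exact (ge_of_tendsto' hu h1).trans (csInf_le hKb ⟨ν, hν, rfl⟩)
  obtain ⟨μ, hμ, hmu⟩ := hmin
  have hzero : s μ ≤ 0 := by
    by_contra! hpos
    have hsup : ∀ x ∈ Nul e μ, ∀ y ∈ Nul e μ, x ⊓ y ∈ Nul e μ ∧ I x + I y - s μ ≤ I (x ⊓ y) := by
      rintro x ⟨hx, hxe, hx0⟩ y ⟨hy, hye, hy0⟩
      have hi : 0 ≤ x ⊓ y := le_inf hx hy
      have hxy : x ⊓ y + x ⊔ y = x + y := inf_add_sup x y
      have h1 := hKnn μ hμ _ hi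
      have h2 := hKnn μ hμ _ (hx.trans (le_sup_left : x ≤ x ⊔ y))
      have h3 := congrArg μ hxy
      rw [map_add, map_add, hx0, hy0] at h3
      have h4 := congrArg I hxy
      rw [map_add, map_add] at h4
      have h5 := hle μ (x ⊔ y) ⟨hx.trans le_sup_left, sup_le hxe hye, by linarith⟩
      exact ⟨⟨hi, inf_le_left.trans hxe, by linarith⟩, by linarith⟩
    let X : ℝ → Set E := fun ε => {x | x ∈ Nul e μ ∧ s μ - ε ≤ I x}
    have hXconv : ∀ ε, Convex ℝ (X ε) := fun ε => by
      rintro x ⟨hx, hxI⟩ y ⟨hy, hyI⟩ a b ha hb hab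
      refine ⟨convex_nul e μ hx hy ha hb hab, ?_⟩
      rw [map_add, map_smul, map_smul, smul_eq_mul, smul_eq_mul]
      have : s μ - ε = a * (s μ - ε) + b * (s μ - ε) := by rw [← add_mul, hab, one_mul]
      rw [this]
      gcongr
    have hclaim : ∃ ε > 0, ∃ δ > 0, ∀ x ∈ X ε, ∀ c ∈ C, δ ≤ ‖x - c‖ := by
      by_contra! hcon
      have hsel : ∀ n : ℕ, ∃ x ∈ X (s μ / 4 * (1 / 2) ^ n), ∃ c ∈ C, ‖x - c‖ < (1 / 2) ^ n :=
        fun n => hcon _ (by positivity) _ (by positivity)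
      choose x hxX c hcC hxc using hsel
      let y : ℕ → E := fun n => Nat.rec (x 0) (fun k z => z ⊓ x (k + 1)) n
      have hy0 : y 0 = x 0 := rfl
      have hys : ∀ n, y (n + 1) = y n ⊓ x (n + 1) := fun n => rfl
      have hyx : ∀ n, y n ≤ x n := by
        rintro (_ | n)
        · exact le_rfl
        · rw [hys]; exact inf_le_right
      have hanti : Antitone y := antitone_nat_of_succ_le fun n => by rw [hys]; exact inf_le_left
      have hyI : ∀ n, y n ∈ Nul e μ ∧ s μ / 2 + s μ / 4 * (1 / 2) ^ n ≤ I (y n) := by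
        intro n
        induction n with
        | zero =>
          refine ⟨(hxX 0).1, ?_⟩
          have := (hxX 0).2
          rw [hy0]
          norm_num at this ⊢
          linarith
        | succ n ih =>
          have h1 := hsup _ ih.1 _ (hxX (n + 1)).1
          have h2 := (hxX (n + 1)).2
          refine ⟨h1.1, ?_⟩
          rw [hys]
          have h3 := h1.2
          have h4 := ih.2
          rw [pow_succ] at h2 ⊢
          linarith
      obtain ⟨z, hz, hzy, hzI⟩ := hinf y (s μ / 2) hanti (fun n => (hyI n).1.1) (fun n => by
        have := (hyI n).2
        have : 0 ≤ s μ / 4 * (1 / 2) ^ n := by positivity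
        linarith)
      have hzC : z ∈ C := by
        have hmem : ∀ n, z - (x n - c n) ∈ C := fun n => by
          have := hadd _ (hcC n) _ (hneg (x n - z) (sub_nonneg.2 ((hzy n).trans (hyx n))))
          convert this using 1
          abel
        have ht : Filter.Tendsto (fun n => x n - c n) Filter.atTop (nhds 0) := by
          refine squeeze_zero_norm (fun n => (hxc n).le) ?_
          exact tendsto_pow_atTop_nhds_zero_of_lt_one (by norm_num) (by norm_num)
        have ht2 := (tendsto_const_nhds (x := z)).sub ht
        rw [sub_zero] at ht2
        exact hclosed.mem_of_tendsto ht2 (Filter.Eventually.of_forall hmem)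
      have := hC_pos z hzC hz
      rw [this, map_zero] at hzI
      linarith
    obtain ⟨ε, hε, δ, hδ, hd⟩ := hclaim
    obtain ⟨ν, hν, hνX⟩ := separate hconv hcone h0C (hXconv ε) hδ hd
    have hbound : s (μ + ν) ≤ s μ - ε := by
      refine csSup_le (hne _) ?_
      rintro _ ⟨x, ⟨hx, hxe, hx0⟩, rfl⟩
      rw [ContinuousLinearMap.add_apply] at hx0
      have h1 := hKnn μ hμ x hx
      have h2 := hKnn ν hν x hx
      by_contra! hcon
      have := hνX x ⟨⟨hx, hxe, by linarith⟩, hcon.le⟩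
      linarith
    have := hmu (μ + ν) (fun x hx => by
      rw [ContinuousLinearMap.add_apply]
      linarith [hμ x hx, hν x hx])
    linarith
  refine ⟨μ, fun x hx hx0 => ?_, hμ⟩
  refine lt_of_le_of_ne (hKnn μ hμ x hx) fun h => ?_
  obtain ⟨c, hc, hce⟩ := hunit x hx
  have h1 := hle μ (c • x) ⟨smul_nonneg hc.le hx, hce, by rw [map_smul, ← h, smul_zero]⟩
  have h2 := hIpos x hx hx0
  rw [map_smul, smul_eq_mul] at h1
  have := mul_pos hc h2
  linarith

section Linf

variable {Ω : Type*} [MeasurableSpace Ω] (P : Measure Ω) [IsProbabilityMeasure P]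

lemma integrable_linf (x : Lp ℝ ⊤ P) : Integrable x P :=
  (Lp.memLp x).integrable le_top

/-- integration as a linear functional -/
noncomputable def integ : Lp ℝ ⊤ P →ₗ[ℝ] ℝ where
  toFun x := ∫ ω, x ω ∂P
  map_add' x y := by
    rw [integral_congr_ae (Lp.coeFn_add x y)]
    exact integral_add (integrable_linf P x) (integrable_linf P y)
  map_smul' c x := by
    rw [integral_congr_ae (Lp.coeFn_smul c x)]
    exact integral_const_mul c _

instance : PosSMulMono ℝ (Lp ℝ ⊤ P) where
  smul_le_smul_of_nonneg_left := by
    intro c hc x y hxy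
    rw [← Lp.coeFn_le] at hxy ⊢
    filter_upwards [hxy, Lp.coeFn_smul c x, Lp.coeFn_smul c y] with ω h h1 h2
    rw [h1, h2]
    exact mul_le_mul_of_nonneg_left h hc

lemma inf_exists (y : ℕ → Lp ℝ ⊤ P) (c : ℝ) (hy : Antitone y) (h0 : ∀ n, 0 ≤ y n)
    (hc : ∀ n, c ≤ integ P (y n)) :
    ∃ z : Lp ℝ ⊤ P, 0 ≤ z ∧ (∀ n, z ≤ y n) ∧ c ≤ integ P z := by
  have hanti : ∀ᵐ ω ∂P, Antitone fun n => y n ω := by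
    have : ∀ᵐ ω ∂P, ∀ n, y (n + 1) ω ≤ y n ω := ae_all_iff.2 fun n =>
      (Lp.coeFn_le _ _).2 (hy (Nat.le_succ n))
    filter_upwards [this] with ω h using antitone_nat_of_succ_le h
  have hnn : ∀ᵐ ω ∂P, ∀ n, 0 ≤ y n ω := ae_all_iff.2 fun n => (Lp.coeFn_nonneg _).2 (h0 n)
  let F : Ω → ℝ := fun ω => ⨅ n, y n ω
  have hFm : AEStronglyMeasurable F P :=
    (AEMeasurable.iInf fun n => (Lp.aestronglyMeasurable (y n)).aemeasurable).aestronglyMeasurable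
  have hF0 : ∀ᵐ ω ∂P, 0 ≤ F ω := by
    filter_upwards [hnn] with ω h using le_ciInf h
  have hFle : ∀ᵐ ω ∂P, ∀ n, F ω ≤ y n ω := by
    filter_upwards [hnn] with ω h n using ciInf_le ⟨0, by rintro _ ⟨k, rfl⟩; exact h k⟩ n
  have hFL : MemLp F ⊤ P := by
    refine (Lp.memLp (y 0)).mono hFm ?_
    filter_upwards [hF0, hFle] with ω h1 h2
    rw [Real.norm_of_nonneg h1, Real.norm_of_nonneg (h1.trans (h2 0))]
    exact h2 0
  have ht := integral_tendsto_of_tendsto_of_antitone (fun n => integrable_linf P (y n))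
    (hFL.integrable le_top) hanti (by
      filter_upwards [hanti, hnn] with ω h1 h2
      exact tendsto_atTop_ciInf h1 ⟨0, by rintro _ ⟨k, rfl⟩; exact h2 k⟩)
  refine ⟨hFL.toLp F, ?_, fun n => ?_, ?_⟩
  · rw [← Lp.coeFn_nonneg]
    filter_upwards [hFL.coeFn_toLp, hF0] with ω h1 h2
    rw [h1]; exact h2
  · rw [← Lp.coeFn_le]
    filter_upwards [hFL.coeFn_toLp, hFle] with ω h1 h2
    rw [h1]; exact h2 n
  · have : integ P (hFL.toLp F) = ∫ ω, F ω ∂P := integral_congr_ae hFL.coeFn_toLp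
    rw [this]
    exact ge_of_tendsto' ht hc

end Linf

end KrepsYan

/-- Kreps–Yan theorem for `L^∞` with the norm topology: for any norm-closed
convex cone `C ⊆ L^∞` with `C ∩ L^∞_+ = {0}` and `-L^∞_+ ⊆ C`, there is a continuous
linear functional `μ` on `L^∞` that is strictly positive and non-positive on `C`. -/
theorem stmt2 {Ω : Type*} [MeasurableSpace Ω] (P : Measure Ω) [IsProbabilityMeasure P]
    (C : Set (Lp ℝ ⊤ P))
    (hclosed : IsClosed C) (hconv : Convex ℝ C)
    (hcone : ∀ (c : ℝ), 0 ≤ c → ∀ x ∈ C, c • x ∈ C)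
    (hC_pos : C ∩ {x : Lp ℝ ⊤ P | 0 ≤ᵐ[P] ⇑x} = {0})
    (hneg : ∀ x : Lp ℝ ⊤ P, 0 ≤ᵐ[P] ⇑x → -x ∈ C) :
    ∃ μ : (Lp ℝ ⊤ P) →L[ℝ] ℝ,
      (∀ x : Lp ℝ ⊤ P, 0 ≤ᵐ[P] ⇑x → x ≠ 0 → 0 < μ x) ∧
      (∀ x ∈ C, μ x ≤ 0) := by
  have hone : MemLp (fun _ : Ω => (1 : ℝ)) ⊤ P := memLp_const 1
  have hnn : ∀ x : Lp ℝ ⊤ P, 0 ≤ x → 0 ≤ KrepsYan.integ P x := fun x hx =>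
    integral_nonneg_of_ae ((Lp.coeFn_nonneg x).2 hx)
  obtain ⟨μ, h1, h2⟩ := KrepsYan.main (KrepsYan.integ P) (hone.toLp _)
    (by
      rw [← Lp.coeFn_nonneg]
      filter_upwards [hone.coeFn_toLp] with ω h
      rw [h]; exact zero_le_one) hnn
    (by
      intro x hx hx0
      refine lt_of_le_of_ne (hnn x hx) fun h => hx0 ?_
      have := (integral_eq_zero_iff_of_nonneg_ae ((Lp.coeFn_nonneg x).2 hx)
        (KrepsYan.integrable_linf P x)).1 h.symm
      exact (Lp.eq_zero_iff_ae_eq_zero).2 this)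
    (by
      intro x hx
      have hpos : 0 < 1 + ‖x‖ := by positivity
      refine ⟨(1 + ‖x‖)⁻¹, by positivity, ?_⟩
      rw [← Lp.coeFn_le]
      have hb : ∀ᵐ ω ∂P, ‖x ω‖ ≤ ‖x‖ := by
        have := ae_le_eLpNormEssSup (f := x) (μ := P)
        filter_upwards [this] with ω h
        rw [Lp.norm_def, eLpNorm_exponent_top]
        have hfin : eLpNormEssSup x P ≠ ⊤ := by
          rw [← eLpNorm_exponent_top]; exact Lp.eLpNorm_ne_top x
        have := ENNReal.toReal_mono hfin h
        simpa using this
      filter_upwards [hb, hone.coeFn_toLp, Lp.coeFn_smul (1 + ‖x‖)⁻¹ x] with ω h3 h4 h5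
      rw [h4, h5]
      simp only [Pi.smul_apply, smul_eq_mul]
      rw [inv_mul_le_iff₀ hpos]
      have := Real.le_norm_self (x ω)
      linarith)
    (KrepsYan.inf_exists P) C hclosed hconv hcone
    (fun x hx h0 => by
      have : x ∈ C ∩ {x : Lp ℝ ⊤ P | 0 ≤ᵐ[P] ⇑x} := ⟨hx, (Lp.coeFn_nonneg x).2 h0⟩
      rw [hC_pos] at this
      exact this)
    (fun x hx => hneg x ((Lp.coeFn_nonneg x).2 hx))
  exact ⟨μ, fun x hx => h1 x ((Lp.coeFn_nonneg x).1 hx), h2⟩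
end

section
/- Let C ⊆ L^∞ be a norm-closed convex cone with -L^∞_+ ⊆ C and C ∩ L^∞_+ = {0}, and let Q be a probability measure equivalent to P with φ(1) := -sup_{x∈C₁} ∫x dQ finite (C₁ = {x ∈ C : ess inf x ≥ -1}). Then for every λ > -φ(1) there exists ν ∈ ba^+ such that μ = Q + ν satisfies ⟨x, μ⟩ ≤ 0 for all x ∈ C. -/
open MeasureTheory

lemma stmt17_aux {E : Type*} [NormedAddCommGroup E] [NormedSpace ℝ E] [PartialOrder E]
    [IsOrderedAddMonoid E] (hsm : ∀ (c : ℝ) (x : E), 0 ≤ c → 0 ≤ x → 0 ≤ c • x)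
    (e : E) (he : ∀ y : E, y ≤ ‖y‖ • e)
    (q : E →ₗ[ℝ] ℝ) (C : Set E) (hC0 : (0 : E) ∈ C)
    (hadd : ∀ x ∈ C, ∀ y ∈ C, x + y ∈ C)
    (hcone : ∀ (c : ℝ), 0 ≤ c → ∀ x ∈ C, c • x ∈ C) (l : ℝ)
    (h : ∀ x ∈ C, ∀ s : ℝ, 0 ≤ s → 0 ≤ x + s • e → q x ≤ l * s) :
    ∃ ν : E →L[ℝ] ℝ, (∀ x, 0 ≤ x → 0 ≤ ν x) ∧ ∀ x ∈ C, q x + ν x ≤ 0 := by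
  let K0 : ConvexCone ℝ (E × ℝ) :=
    { carrier := {z | ∃ x ∈ C, ∃ s : ℝ, 0 ≤ s ∧ 0 ≤ x + s • e - z.1 ∧ l * s - q x ≤ z.2}
      smul_mem' := by
        rintro c hc ⟨y, a⟩ ⟨x, hx, s, hs, h1, h2⟩
        refine ⟨c • x, hcone c hc.le x hx, c * s, by positivity, ?_, ?_⟩
        · have := hsm c _ hc.le h1
          simpa [smul_sub, smul_add, mul_smul] using this
        · have := mul_le_mul_of_nonneg_left h2 hc.le
          simp only [Prod.smul_snd, smul_eq_mul, map_smul] at this ⊢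
          linarith
      add_mem' := by
        rintro ⟨y, a⟩ ⟨x, hx, s, hs, h1, h2⟩ ⟨y', a'⟩ ⟨x', hx', s', hs', h1', h2'⟩
        refine ⟨x + x', hadd x hx x' hx', s + s', by positivity, ?_, ?_⟩
        · have := add_nonneg h1 h1'
          convert this using 1
          simp only [Prod.fst_add, add_smul]
          abel
        · simp only [Prod.snd_add, map_add] at *
          linarith }
  let K : PointedCone ℝ (E × ℝ) := K0.toPointedCone
    (show K0.Pointed from ⟨0, hC0, 0, le_rfl, by simp, by simp⟩)
  have hK : ∀ z : E × ℝ, z ∈ K ↔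
      ∃ x ∈ C, ∃ s : ℝ, 0 ≤ s ∧ 0 ≤ x + s • e - z.1 ∧ l * s - q x ≤ z.2 := fun z => Iff.rfl
  let f : (E × ℝ) →ₗ.[ℝ] ℝ :=
    ⟨Submodule.prod ⊥ ⊤, (LinearMap.snd ℝ E ℝ).comp (Submodule.subtype _)⟩
  obtain ⟨g, hg, hgK⟩ := riesz_extension K f
    (by
      rintro ⟨⟨y, a⟩, hy⟩ hz
      have hy0 : y = 0 := by simpa [f] using hy
      subst hy0
      obtain ⟨x, hx, s, hs, h1, h2⟩ := (hK _).1 hz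
      have := h x hx s hs (by simpa using h1)
      change 0 ≤ a
      simp only at h2
      linarith)
    (by
      rintro ⟨y, a⟩
      refine ⟨⟨(0, l * ‖y‖ - a), by simp [f]⟩, (hK _).2 ⟨0, hC0, ‖y‖, norm_nonneg _, ?_, ?_⟩⟩
      · simpa using he y
      · simp)
  have hg1 : ∀ a : ℝ, g (0, a) = a := fun a => hg ⟨(0, a), by simp [f]⟩
  let ν : E →ₗ[ℝ] ℝ := -(g.comp (LinearMap.inl ℝ E ℝ))
  have hν : ∀ y a, (y, a) ∈ K → ν y ≤ a := by
    intro y a hya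
    have h1 := hgK _ hya
    have h2 : ((y, a) : E × ℝ) = (y, 0) + (0, a) := by simp
    rw [h2, map_add, hg1] at h1
    change -(g (y, 0)) ≤ a
    linarith
  have hle : ∀ y, ν y ≤ l * ‖y‖ := fun y =>
    hν y _ ((hK _).2 ⟨0, hC0, ‖y‖, norm_nonneg _, by simpa using he y, by simp⟩)
  refine ⟨ν.mkContinuous l ?_, ?_, ?_⟩
  · intro y
    rw [Real.norm_eq_abs, abs_le]
    have := hle (-y)
    rw [map_neg, norm_neg] at this
    exact ⟨by linarith, hle y⟩
  · intro x hx
    have := hν (-x) 0 ((hK _).2 ⟨0, hC0, 0, le_rfl, by simpa using hx, by simp⟩)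
    rw [map_neg] at this
    change 0 ≤ ν x
    linarith
  · intro x hx
    have := hν x (- q x) ((hK _).2 ⟨x, hx, 0, le_rfl, by simp, by simp⟩)
    change q x + ν x ≤ 0
    linarith

/-- for `C` a norm-closed convex cone in `L^∞` with `-L^∞_+ ⊆ C` and
`C ∩ L^∞_+ = {0}`, and `Q ∼ P` with `φ(1) = -sup_{x ∈ C₁} ∫ x dQ` finite, for every
`λ > -φ(1)` there exists `ν ∈ ba⁺` such that `μ = Q + ν` is non-positive on `C`. -/
theorem stmt17 {Ω : Type*} [MeasurableSpace Ω] (P : Measure Ω) [IsProbabilityMeasure P]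
    (C : Set (Lp ℝ ⊤ P))
    (hclosed : IsClosed C) (hconv : Convex ℝ C)
    (hcone : ∀ (c : ℝ), 0 ≤ c → ∀ x ∈ C, c • x ∈ C)
    (hC_pos : C ∩ {x : Lp ℝ ⊤ P | 0 ≤ᵐ[P] ⇑x} = {0})
    (hneg : ∀ x : Lp ℝ ⊤ P, 0 ≤ᵐ[P] ⇑x → -x ∈ C)
    (Q : Measure Ω) [IsProbabilityMeasure Q] (hQP : Q ≪ P) (hPQ : P ≪ Q)
    (hbdd : BddAbove {r : ℝ | ∃ x ∈ C, (-1 : ℝ) ≤ essInf (⇑x) P ∧ r = ∫ ω, x ω ∂Q}) :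
    ∀ l : ℝ,
      sSup {r : ℝ | ∃ x ∈ C, (-1 : ℝ) ≤ essInf (⇑x) P ∧ r = ∫ ω, x ω ∂Q} < l →
      ∃ ν : (Lp ℝ ⊤ P) →L[ℝ] ℝ,
        (∀ x : Lp ℝ ⊤ P, 0 ≤ᵐ[P] ⇑x → 0 ≤ ν x) ∧
        (∀ x ∈ C, (∫ ω, x ω ∂Q) + ν x ≤ 0) := by
  intro l hl
  have hbd : ∀ x : Lp ℝ ⊤ P, ∀ᵐ ω ∂P, ‖x ω‖ ≤ ‖x‖ := by
    intro x
    have h1 := ae_le_eLpNormEssSup (f := (x : Ω → ℝ)) (μ := P)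
    filter_upwards [h1] with ω hω
    rw [Lp.norm_def, eLpNorm_exponent_top]
    have h2 : eLpNormEssSup (x : Ω → ℝ) P ≠ ⊤ := by
      have := Lp.eLpNorm_ne_top x
      rwa [eLpNorm_exponent_top] at this
    have := ENNReal.toReal_mono h2 hω
    simpa using this
  have hint : ∀ x : Lp ℝ ⊤ P, Integrable x Q := fun x =>
    Integrable.of_bound ((Lp.aestronglyMeasurable x).mono_ac hQP) ‖x‖ (hQP.ae_le (hbd x))
  let q : Lp ℝ ⊤ P →ₗ[ℝ] ℝ :=
    { toFun := fun x => ∫ ω, x ω ∂Q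
      map_add' := fun x y => by
        rw [← integral_add (hint x) (hint y)]
        exact integral_congr_ae (hQP.ae_le (Lp.coeFn_add x y))
      map_smul' := fun c x => by
        simp only [RingHom.id_apply, smul_eq_mul]
        rw [← integral_const_mul]
        exact integral_congr_ae (hQP.ae_le (Lp.coeFn_smul c x)) }
  have hC0 : (0 : Lp ℝ ⊤ P) ∈ C := by
    have : (0 : Lp ℝ ⊤ P) ∈ C ∩ {x : Lp ℝ ⊤ P | 0 ≤ᵐ[P] ⇑x} := by rw [hC_pos]; rfl
    exact this.1
  have hadd : ∀ x ∈ C, ∀ y ∈ C, x + y ∈ C := by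
    intro x hx y hy
    have h1 := hcone 2 (by norm_num) _
      (hconv hx hy (a := 1/2) (b := 1/2) (by norm_num) (by norm_num) (by norm_num))
    rw [smul_add, smul_smul, smul_smul] at h1
    norm_num at h1
    exact h1
  let e : Lp ℝ ⊤ P := Lp.const ⊤ P (1 : ℝ)
  have hse : ∀ s : ℝ, ⇑(s • e) =ᵐ[P] fun _ => s := by
    intro s
    filter_upwards [Lp.coeFn_smul s e, Lp.coeFn_const ⊤ P (1 : ℝ)] with ω h1 h2
    rw [h1, Pi.smul_apply, h2]
    simp
  obtain ⟨ν, h1, h2⟩ := stmt17_aux (E := Lp ℝ ⊤ P)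
    (by
      intro c x hc hx
      rw [← Lp.coeFn_nonneg] at hx ⊢
      filter_upwards [hx, Lp.coeFn_smul c x] with ω h1 h2
      rw [h2]
      exact mul_nonneg hc h1)
    e
    (by
      intro y
      rw [← Lp.coeFn_le]
      filter_upwards [hbd y, hse ‖y‖] with ω h1 h2
      rw [h2]
      exact (le_abs_self _).trans h1)
    q C hC0 hadd hcone l
    (by
      intro x hx s hs hxs
      rw [← Lp.coeFn_nonneg] at hxs
      have hxs' : ∀ᵐ ω ∂P, -s ≤ x ω := by
        filter_upwards [hxs, Lp.coeFn_add x (s • e), hse s] with ω h1 h2 h3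
        rw [h2, Pi.add_apply, h3] at h1
        simp only [Pi.zero_apply] at h1
        linarith
      rcases hs.eq_or_lt with rfl | hs
      · have : x ∈ C ∩ {x : Lp ℝ ⊤ P | 0 ≤ᵐ[P] ⇑x} :=
          ⟨hx, by filter_upwards [hxs'] with ω h; simpa using h⟩
        rw [hC_pos] at this
        rw [Set.mem_singleton_iff.1 this]
        simp
      · have hmem : q (s⁻¹ • x) ≤ l := by
          refine le_trans (le_csSup hbdd ?_) hl.le
          refine ⟨s⁻¹ • x, hcone _ (by positivity) x hx, ?_, rfl⟩
          have hb := hbd (s⁻¹ • x)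
          refine Filter.le_liminf_of_le ?_ ?_
          · refine Filter.IsBoundedUnder.isCoboundedUnder_ge ⟨‖s⁻¹ • x‖, ?_⟩
            rw [Filter.eventually_map]
            filter_upwards [hb] with ω h
            exact (le_abs_self _).trans h
          · filter_upwards [hxs', Lp.coeFn_smul s⁻¹ x] with ω h1 h2
            rw [h2, Pi.smul_apply, smul_eq_mul]
            have := mul_le_mul_of_nonneg_left h1 (inv_nonneg.2 hs.le)
            rwa [mul_neg, inv_mul_cancel₀ hs.ne'] at this
        rw [map_smul, smul_eq_mul, inv_mul_le_iff₀ hs] at hmem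
        linarith)
  exact ⟨ν, fun x hx => h1 x ((Lp.coeFn_nonneg x).1 hx), h2⟩
end
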